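/- Assume d > 0 and 0 < a₁ < a₂ (so that k < −1). Then the delay equation x′(t) = A₀(t) f₀(x(t−1)) has no 2T-periodic slowly oscillating solution of type II: there is no h ≠ 0 such that the solution x(·,h) with constant initial function ≡ h satisfies x(t + 2T, h) = x(t, h) for all t ≥ 0 and has exactly one zero in each interval (nT, (n+1)T]. -/

import Mathlib

/-! On a slowly oscillating solution, between consecutive zeros `z < z'` the modulus `|x|` grows
at rate `A₀` during the unit time `[z, z+1]` and then decreases to zero at rate `A₀` on
`[z+1, z']`; hence `∫ A₀` over `[z, z']` is twice `∫ A₀` over `[z, z+1]` (`half_wave`).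

Since `d = ∫₀ᵀ A₀ - 2 a₂ (T - 1)` and `A₀ ≤ a₂`, the hypothesis `d > 0` makes every window of
length one carry more than half of `∫₀ᵀ A₀` (`window_A0`). So every half-wave carries more than
`∫₀ᵀ A₀`. A `2T`-periodic solution of type II has consecutive zeros `z₁ < z₂ < z₁ + 2T`, and the
two half-waves together carry exactly `2 ∫₀ᵀ A₀`, a contradiction (`no_periodic_of_pos`). A
negative initial value reduces to a positive one by the symmetry `x ↦ -x`. -/

open Set Filter

/-- `t mod T`, i.e. `t - T⌊t/T⌋ ∈ [0,T)` for `T > 0`. -/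
noncomputable def rmod (T t : ℝ) : ℝ := t - T * (⌊t / T⌋ : ℝ)

/-- `f₀(x) = -sign x`. -/
noncomputable def f0 (x : ℝ) : ℝ := -Real.sign x

/-- The `(p₁+p₂)`-periodic step coefficient. -/
noncomputable def A0 (p1 p2 a1 a2 t : ℝ) : ℝ :=
  if rmod (p1 + p2) t < p1 then a1 else a2

/-- `x` is the solution on `[-1,∞)` of `x'(t) = a(t) f(x(t-1))` with initial function `φ`. -/
def IsSolution (a f φ x : ℝ → ℝ) : Prop :=
  ContinuousOn x (Ici (-1 : ℝ)) ∧ (∀ s ∈ Icc (-1 : ℝ) 0, x s = φ s) ∧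
    ∀ t ≥ (0 : ℝ), x t = φ 0 + ∫ s in (0:ℝ)..t, a s * f (x (s - 1))

/-- Solution with constant initial function `≡ h`. -/
def IsSolutionC (a f : ℝ → ℝ) (h : ℝ) (x : ℝ → ℝ) : Prop :=
  IsSolution a f (fun _ => h) x

open MeasureTheory intervalIntegral

/-- If `x` is positive on `(z-1, z)`, vanishes at `z` and next vanishes at `z'`, then `x` falls
during unit time after `z` and then climbs back to zero. The fall is `∫ A` over `[z, z+1]`, the
climb is `∫ A` over `[z+1, z']`, and they agree. -/
lemma half_wave {A x : ℝ → ℝ} {z z' : ℝ} (hA : ∀ u v, IntervalIntegrable A volume u v)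
    (hApos : ∀ t, 0 < A t)
    (hx : ContinuousOn x (Ici (-1 : ℝ)))
    (H : ∀ s t, 0 ≤ s → s ≤ t → x t - x s = ∫ u in s..t, A u * f0 (x (u - 1)))
    (hz0 : 0 ≤ z) (hzz : z < z') (hz : x z = 0) (hz' : x z' = 0)
    (hpos : ∀ t ∈ Ioo (z - 1) z, 0 < x t) (hne : ∀ t ∈ Ioo z z', x t ≠ 0) :
    (∀ t ∈ Ioo z z', x t < 0) ∧ z + 1 < z' ∧
      ∫ u in z..z', A u = 2 * ∫ u in z..(z + 1), A u := by
  have hfall : ∀ t ∈ Icc z (z + 1), x t = -∫ u in z..t, A u := by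
    intro t ht
    have h1 := H z t hz0 ht.1
    rw [hz, sub_zero] at h1
    rw [h1, ← intervalIntegral.integral_neg]
    refine integral_congr_Ioo_of_le ht.1 fun u hu => ?_
    have : 0 < x (u - 1) := hpos _ ⟨by linarith [hu.1], by linarith [hu.2, ht.2]⟩
    simp [f0, Real.sign_of_pos this]
  have hneg1 : ∀ t ∈ Ioc z (z + 1), x t < 0 := by
    intro t ht
    rw [hfall t ⟨ht.1.le, ht.2⟩, neg_lt_zero]
    exact intervalIntegral_pos_of_pos (hA _ _) hApos ht.1
  have hgap : z + 1 < z' := by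
    by_contra! hle
    exact (hneg1 z' ⟨hzz, hle⟩).ne hz'
  have hneg : ∀ t ∈ Ioo z z', x t < 0 := by
    intro t ht
    rcases le_total t (z + 1) with h | h
    · exact hneg1 t ⟨ht.1, h⟩
    · by_contra! h0
      have hc : ContinuousOn x (Icc (z + 1) t) :=
        hx.mono fun u hu => show (-1 : ℝ) ≤ u by linarith [hu.1]
      obtain ⟨c, hc1, hc2⟩ := intermediate_value_Icc h hc
        ⟨(hneg1 (z + 1) ⟨by linarith, le_rfl⟩).le, h0⟩
      exact hne c ⟨by linarith [hc1.1], by linarith [hc1.2, ht.2]⟩ hc2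
  refine ⟨hneg, hgap, ?_⟩
  have h2 := H (z + 1) z' (by linarith) hgap.le
  have h3 : ∫ u in (z + 1)..z', A u * f0 (x (u - 1)) = ∫ u in (z + 1)..z', A u := by
    refine integral_congr_Ioo_of_le hgap.le fun u hu => ?_
    have : x (u - 1) < 0 := hneg _ ⟨by linarith [hu.1], by linarith [hu.2]⟩
    simp [f0, Real.sign_of_neg this]
  rw [h3, hz', hfall (z + 1) ⟨by linarith, le_rfl⟩] at h2
  rw [← integral_add_adjacent_intervals (hA z (z + 1)) (hA (z + 1) z')]
  linarith

/-- The contradiction for a positive initial value: the half-waves `[z₁, z₂]` and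
`[z₂, z₁ + 2T]` each carry more than `∫ A` over one period, but together exactly two periods. -/
lemma no_periodic_of_pos {A x : ℝ → ℝ} {T h : ℝ} (hA : ∀ u v, IntervalIntegrable A volume u v)
    (hApos : ∀ t, 0 < A t) (hAper : Function.Periodic A T)
    (hwin : ∀ u, ∫ t in (0 : ℝ)..T, A t < 2 * ∫ t in u..(u + 1), A t)
    (hT : 1 < T) (hh : 0 < h)
    (hx : ContinuousOn x (Ici (-1 : ℝ))) (hinit : ∀ s ∈ Icc (-1 : ℝ) 0, x s = h)
    (H : ∀ s t, 0 ≤ s → s ≤ t → x t - x s = ∫ u in s..t, A u * f0 (x (u - 1)))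
    (hper : ∀ t ≥ (0 : ℝ), x (t + 2 * T) = x t)
    (hzero : ∀ n : ℕ, ∃ z, {s ∈ Ioc ((n : ℝ) * T) (((n : ℝ) + 1) * T) | x s = 0} = {z}) :
    False := by
  have key : ∀ n : ℕ, ∃ z, (n : ℝ) * T < z ∧ z ≤ ((n : ℝ) + 1) * T ∧ x z = 0 ∧
      ∀ s, (n : ℝ) * T < s → s ≤ ((n : ℝ) + 1) * T → x s = 0 → s = z := by
    intro n
    obtain ⟨z, hz⟩ := hzero n
    have hmem : z ∈ {s ∈ Ioc ((n : ℝ) * T) (((n : ℝ) + 1) * T) | x s = 0} := by rw [hz]; rfl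
    refine ⟨z, hmem.1.1, hmem.1.2, hmem.2, fun s h1 h2 h3 => ?_⟩
    have : s ∈ {s ∈ Ioc ((n : ℝ) * T) (((n : ℝ) + 1) * T) | x s = 0} := ⟨⟨h1, h2⟩, h3⟩
    rw [hz] at this
    exact this
  obtain ⟨z1, h1l, h1u, h1z, h1q⟩ := key 0
  obtain ⟨z2, h2l, h2u, h2z, h2q⟩ := key 1
  obtain ⟨z3, h3l, h3u, h3z, h3q⟩ := key 2
  norm_num at h1l h1u h1q h2l h2u h2q h3l h3u h3q
  have h31 : z1 + 2 * T = z3 :=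
    h3q _ (by linarith) (by linarith) (by rw [hper z1 h1l.le, h1z])
  have hpos1 : ∀ t ∈ Ioo (z1 - 1) z1, 0 < x t := by
    intro t ht
    rcases le_total t 0 with h0 | h0
    · rw [hinit t ⟨by linarith [ht.1], h0⟩]; exact hh
    · by_contra! hle
      have hc : ContinuousOn x (Icc 0 t) :=
        hx.mono fun u hu => show (-1 : ℝ) ≤ u by linarith [hu.1]
      have hx0 : x 0 = h := hinit 0 ⟨by norm_num, le_rfl⟩
      obtain ⟨c, hc1, hc2⟩ := intermediate_value_Icc' h0 hc ⟨hle, by rw [hx0]; exact hh.le⟩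
      have hc0 : 0 < c := by
        rcases hc1.1.eq_or_lt with h | h
        · rw [← h, hx0] at hc2; exact absurd hc2 hh.ne'
        · exact h
      have := h1q c hc0 (by linarith [hc1.2, ht.2]) hc2
      linarith [hc1.2, ht.2]
  have hne1 : ∀ t ∈ Ioo z1 z2, x t ≠ 0 := by
    intro t ht h0
    rcases le_or_gt t T with h | h
    · linarith [h1q t (by linarith [ht.1]) h h0, ht.1]
    · linarith [h2q t h (by linarith [ht.2]) h0, ht.2]
  have hne2 : ∀ t ∈ Ioo z2 z3, x t ≠ 0 := by
    intro t ht h0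
    rcases le_or_gt t (2 * T) with h | h
    · linarith [h2q t (by linarith [ht.1]) h h0, ht.1]
    · linarith [h3q t h (by linarith [ht.2]) h0, ht.2]
  obtain ⟨hn, hg, e1⟩ := half_wave hA hApos hx H h1l.le (by linarith) h1z h2z hpos1 hne1
  -- The second half-wave is the first one for the solution `-x`.
  have H' : ∀ s t, 0 ≤ s → s ≤ t →
      (fun r => -x r) t - (fun r => -x r) s =
        ∫ u in s..t, A u * f0 ((fun r => -x r) (u - 1)) := by
    intro s t hs hst
    have := H s t hs hst
    have e : ∀ y, f0 (-y) = -f0 y := fun y => by simp [f0, Real.sign_neg]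
    simp only [e, mul_neg, intervalIntegral.integral_neg]
    linarith
  obtain ⟨-, -, e2⟩ := half_wave (x := fun r => -x r) hA hApos hx.neg H' (z := z2) (z' := z3)
    (by linarith) (by linarith) (by simp [h2z]) (by simp [h3z])
    (fun t ht => neg_pos.2 (hn t ⟨by linarith [ht.1], ht.2⟩))
    (fun t ht => neg_ne_zero.2 (hne2 t ht))
  have e3 := integral_add_adjacent_intervals (hA z1 z2) (hA z2 z3)
  have e4 := integral_add_adjacent_intervals (hA z1 (z1 + T)) (hA (z1 + T) (z1 + T + T))
  have e5 := hAper.intervalIntegral_add_eq z1 0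
  have e6 := hAper.intervalIntegral_add_eq (z1 + T) 0
  rw [zero_add] at e5 e6
  have e7 : z1 + T + T = z3 := by linarith
  rw [e7] at e4 e6
  linarith [hwin z1, hwin z2]

lemma measurable_f0 : Measurable f0 := by
  have : Measurable Real.sign := by
    unfold Real.sign
    exact Measurable.ite measurableSet_Iio measurable_const
      (Measurable.ite measurableSet_Ioi measurable_const measurable_const)
  exact this.neg

lemma measurable_A0 (p1 p2 a1 a2 : ℝ) : Measurable (A0 p1 p2 a1 a2) := by
  unfold A0
  have : Measurable (rmod (p1 + p2)) := by unfold rmod; fun_prop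
  exact Measurable.ite (measurableSet_lt this measurable_const) measurable_const measurable_const

lemma A0_periodic {p1 p2 a1 a2 : ℝ} (hT : 1 < p1 + p2) :
    Function.Periodic (A0 p1 p2 a1 a2) (p1 + p2) := by
  intro t
  have : rmod (p1 + p2) (t + (p1 + p2)) = rmod (p1 + p2) t := by
    unfold rmod
    rw [add_div, div_self (by linarith : p1 + p2 ≠ 0), Int.floor_add_one]
    push_cast
    ring
  simp [A0, this]

lemma rmod_eq_self {T t : ℝ} (h0 : 0 ≤ t) (h1 : t < T) : rmod T t = t := by
  have : ⌊t / T⌋ = 0 := by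
    rw [Int.floor_eq_zero_iff]
    exact ⟨div_nonneg h0 (by linarith), (div_lt_one (by linarith)).2 h1⟩
  simp [rmod, this]

lemma A0_intervalIntegrable (p1 p2 a1 a2 u v : ℝ) :
    IntervalIntegrable (A0 p1 p2 a1 a2) volume u v := by
  refine (intervalIntegrable_const (c := max |a1| |a2|)).mono_fun
    (measurable_A0 p1 p2 a1 a2).aestronglyMeasurable (ae_of_all _ fun t => ?_)
  simp only [Real.norm_eq_abs]
  refine le_trans ?_ (le_abs_self _)
  unfold A0; split_ifs
  · exact le_max_left _ _
  · exact le_max_right _ _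

lemma integral_A0 {p1 p2 a1 a2 : ℝ} (hp1 : 0 < p1) (hp2 : 0 < p2) :
    ∫ t in (0 : ℝ)..(p1 + p2), A0 p1 p2 a1 a2 t = a1 * p1 + a2 * p2 := by
  rw [← integral_add_adjacent_intervals (A0_intervalIntegrable p1 p2 a1 a2 0 p1)
    (A0_intervalIntegrable p1 p2 a1 a2 p1 (p1 + p2))]
  have e1 : ∫ t in (0 : ℝ)..p1, A0 p1 p2 a1 a2 t = ∫ _ in (0 : ℝ)..p1, a1 := by
    refine integral_congr_Ioo_of_le hp1.le fun t ht => ?_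
    simp [A0, rmod_eq_self ht.1.le (show t < p1 + p2 by linarith [ht.2]), ht.2]
  have e2 : ∫ t in p1..(p1 + p2), A0 p1 p2 a1 a2 t = ∫ _ in p1..(p1 + p2), a2 := by
    refine integral_congr_Ioo_of_le (by linarith) fun t ht => ?_
    simp [A0, rmod_eq_self (show 0 ≤ t by linarith [ht.1]) ht.2, ht.1.not_gt]
  rw [e1, e2]
  simp
  ring

/-- The hypothesis `d > 0` says `∫₀ᵀ A₀ > 2 a₂ (T - 1)`. As `A₀ ≤ a₂`, the part of a period
outside a unit window then carries less than half of the integral over the period. -/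
lemma window_A0 {p1 p2 a1 a2 : ℝ} (hp1 : 0 < p1) (hp2 : 0 < p2) (ha12 : a1 < a2)
    (hT : 1 < p1 + p2) (hd : 0 < a1 * p1 + a2 * (2 - 2 * p1 - p2)) (u : ℝ) :
    ∫ t in (0 : ℝ)..(p1 + p2), A0 p1 p2 a1 a2 t < 2 * ∫ t in u..(u + 1), A0 p1 p2 a1 a2 t := by
  have hA := A0_intervalIntegrable p1 p2 a1 a2
  have e1 := integral_add_adjacent_intervals (hA u (u + 1)) (hA (u + 1) (u + (p1 + p2)))
  have e2 := (A0_periodic (a1 := a1) (a2 := a2) hT).intervalIntegral_add_eq u 0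
  rw [zero_add] at e2
  have e3 : ∫ t in (u + 1)..(u + (p1 + p2)), A0 p1 p2 a1 a2 t ≤
      ∫ _ in (u + 1)..(u + (p1 + p2)), a2 := by
    refine integral_mono_on (by linarith) (hA _ _) intervalIntegrable_const fun t _ => ?_
    unfold A0; split_ifs
    · exact ha12.le
    · exact le_rfl
  rw [intervalIntegral.integral_const, smul_eq_mul] at e3
  have e4 := integral_A0 (a1 := a1) (a2 := a2) hp1 hp2
  linarith

/-- The integrand of the delay equation is integrable, so the integral equation can be
restarted from any time `s ≥ 0`. -/
lemma solution_sub {p1 p2 a1 a2 h : ℝ} {x : ℝ → ℝ}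
    (hx : IsSolutionC (A0 p1 p2 a1 a2) f0 h x) (s t : ℝ) (hs : 0 ≤ s) (hst : s ≤ t) :
    x t - x s = ∫ u in s..t, A0 p1 p2 a1 a2 u * f0 (x (u - 1)) := by
  have hint : ∀ r ≥ (0 : ℝ), IntervalIntegrable
      (fun u => A0 p1 p2 a1 a2 u * f0 (x (u - 1))) volume 0 r := by
    intro r hr
    have hc : ContinuousOn (fun u => x (u - 1)) (uIoc 0 r) := by
      refine hx.1.comp (by fun_prop) fun u hu => ?_
      rw [uIoc_of_le hr] at hu
      show (-1 : ℝ) ≤ u - 1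
      linarith [hu.1]
    have hm : AEStronglyMeasurable (fun u => f0 (x (u - 1))) (volume.restrict (uIoc 0 r)) :=
      (measurable_f0.comp_aemeasurable
        (hc.aestronglyMeasurable measurableSet_uIoc).aemeasurable).aestronglyMeasurable
    refine (A0_intervalIntegrable p1 p2 a1 a2 0 r).mono_fun
      ((measurable_A0 p1 p2 a1 a2).aestronglyMeasurable.mul hm) (ae_of_all _ fun u => ?_)
    simp only [norm_mul]
    refine mul_le_of_le_one_right (norm_nonneg _) ?_
    rcases Real.sign_apply_eq (x (u - 1)) with h | h | h <;> simp [f0, h]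
  rw [hx.2.2 t (hs.trans hst), hx.2.2 s hs, add_sub_add_left_eq_sub]
  exact integral_interval_sub_left (hint t (hs.trans hst)) (hint s hs)

/-- for `d > 0` and `0 < a₁ < a₂` (so `k < -1`), the equation has no
`2T`-periodic slowly oscillating solution of type II: there is no `h ≠ 0` such that the
solution with constant initial function `≡ h` is `2T`-periodic and has exactly one zero in
each interval `(nT, (n+1)T]`. -/
theorem stmt15 (p1 p2 a1 a2 k d : ℝ)
    (hp1 : 0 < p1) (hp2 : 0 < p2) (ha1 : 0 < a1) (ha12 : a1 < a2) (hT : 1 < p1 + p2)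
    (hk : k = 1 - 2 * a2 / a1) (hd : d = a1 * p1 + a2 * (2 - 2 * p1 - p2)) (hdpos : 0 < d) :
    ¬ ∃ h : ℝ, h ≠ 0 ∧ ∃ x : ℝ → ℝ, IsSolutionC (A0 p1 p2 a1 a2) f0 h x ∧
      (∀ t ≥ (0 : ℝ), x (t + 2 * (p1 + p2)) = x t) ∧
      ∀ n : ℕ,
        {s ∈ Ioc ((n : ℝ) * (p1 + p2)) (((n : ℝ) + 1) * (p1 + p2)) | x s = 0}.encard = 1 := by
  rintro ⟨h, hh, x, hx, hper, hzero⟩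
  have hA := A0_intervalIntegrable p1 p2 a1 a2
  have hApos : ∀ t, 0 < A0 p1 p2 a1 a2 t := by
    intro t
    unfold A0; split_ifs <;> linarith
  have hwin := window_A0 hp1 hp2 ha12 hT (hd ▸ hdpos)
  have H := solution_sub hx
  have hz := fun n => encard_eq_one.1 (hzero n)
  rcases hh.lt_or_gt with hneg | hpos
  · refine no_periodic_of_pos (x := fun r => -x r) hA hApos (A0_periodic hT) hwin hT
      (neg_pos.2 hneg) hx.1.neg (fun s hs => by simp [hx.2.1 s hs]) ?_
      (fun t ht => by simp only [hper t ht]) (by simpa only [neg_eq_zero] using hz)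
    intro s t hs hst
    have := H s t hs hst
    have e : ∀ y, f0 (-y) = -f0 y := fun y => by simp [f0, Real.sign_neg]
    simp only [e, mul_neg, intervalIntegral.integral_neg]
    linarith
  · exact no_periodic_of_pos hA hApos (A0_periodic hT) hwin hT hpos hx.1 hx.2.1 H hper hz
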